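/- Let D be a digraph on vertex type V and let v, w ∈ V. Then the detour operations commute: (D↑v)↑w = (D↑w)↑v, i.e., the two digraphs have exactly the same arcs. -/

import Mathlib

/-- The detour of a digraph (irreflexive relation) `A` at a vertex `v`. -/
def detour {V : Type*} (A : V → V → Prop) (v : V) : V → V → Prop :=
  fun x y => x ≠ v ∧ y ≠ v ∧ x ≠ y ∧ (A x y ∨ (A x v ∧ A v y))

/-!
Call a walk from `x` to `y` *through* a set `S` if all its interior vertices lie in `S`. As in the
Floyd–Warshall algorithm, cutting a walk through `insert w S` at its first and last interior visits
to `w` shows that there is a walk through `S` or a pair of such walks, from `x` to `w` and from `w`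
to `y`. Hence detouring at the vertices of a finite nonempty set `S`, in any order, yields the
digraph whose arcs `x → y` are the pairs of distinct vertices outside `S` joined by a walk
through `S`, and this depends only on the set `S`.
-/

section DetourSet

variable {V : Type*} {A : V → V → Prop} {S T : Set V} {v w x y s : V}

/-- `WalkThrough A S x y` says that there is a nonempty `A`-walk from `x` to `y` all of whose
interior vertices lie in `S`; the endpoints `x` and `y` may lie in `S` or not. -/
inductive WalkThrough (A : V → V → Prop) (S : Set V) : V → V → Prop
  | arc {x y : V} (hxy : A x y) : WalkThrough A S x y
  | cons {x s y : V} (hxs : A x s) (hs : s ∈ S) (hsy : WalkThrough A S s y) : WalkThrough A S x y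

namespace WalkThrough

theorem mono (hST : S ⊆ T) (h : WalkThrough A S x y) : WalkThrough A T x y := by
  induction h with
  | arc hxy => exact arc hxy
  | cons hxs hs _ ih => exact cons hxs (hST hs) ih

theorem trans (hs : s ∈ S) (hxs : WalkThrough A S x s) (hsy : WalkThrough A S s y) :
    WalkThrough A S x y := by
  induction hxs with
  | arc hxs => exact cons hxs hs hsy
  | cons hxt ht _ ih => exact cons hxt ht (ih hs hsy)

end WalkThrough

theorem walkThrough_empty : WalkThrough A ∅ x y ↔ A x y := by
  refine ⟨fun h => ?_, .arc⟩
  cases h with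
  | arc hxy => exact hxy
  | cons _ hs _ => exact hs.elim

theorem walkThrough_insert :
    WalkThrough A (insert w S) x y ↔
      WalkThrough A S x y ∨ (WalkThrough A S x w ∧ WalkThrough A S w y) := by
  have hS : S ⊆ insert w S := Set.subset_insert w S
  constructor
  · intro h
    induction h with
    | arc hxy => exact .inl (.arc hxy)
    | cons hxs hs _ ih =>
      rcases hs with rfl | hs
      · exact .inr ⟨.arc hxs, ih.elim id And.right⟩
      · exact ih.imp (.cons hxs hs) (And.imp_left (.cons hxs hs))
  · rintro (hxy | ⟨hxw, hwy⟩)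
    · exact hxy.mono hS
    · exact (hxw.mono hS).trans (Set.mem_insert w S) (hwy.mono hS)

theorem walkThrough_singleton : WalkThrough A {v} x y ↔ A x y ∨ (A x v ∧ A v y) := by
  simpa only [insert_empty_eq, walkThrough_empty] using
    walkThrough_insert (A := A) (S := ∅) (w := v) (x := x) (y := y)

/-- The simultaneous detour of `A` at all vertices of a set `S`, the analogue of `detour` with
walks through `S` in place of walks of length at most two through a single vertex. -/
def detourSet (A : V → V → Prop) (S : Set V) : V → V → Prop :=
  fun x y => x ∉ S ∧ y ∉ S ∧ x ≠ y ∧ WalkThrough A S x y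

theorem detourSet_singleton (A : V → V → Prop) (v : V) : detourSet A {v} = detour A v := by
  funext x y
  simp only [detourSet, detour, walkThrough_singleton, Set.mem_singleton_iff, ne_eq]

theorem detour_detourSet (A : V → V → Prop) (S : Set V) (w : V) :
    detour (detourSet A S) w = detourSet A (insert w S) := by
  funext x y
  simp only [detour, detourSet, walkThrough_insert, Set.mem_insert_iff, not_or, eq_iff_iff]
  by_cases hw : w ∈ S
  · have htrans : WalkThrough A S x w ∧ WalkThrough A S w y → WalkThrough A S x y :=
      fun ⟨hxw, hwy⟩ => hxw.trans hw hwy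
    tauto
  · have hwy : y ≠ w ↔ w ≠ y := ne_comm
    tauto

theorem detour_detour (A : V → V → Prop) (v w : V) :
    detour (detour A v) w = detourSet A {w, v} := by
  rw [← detourSet_singleton A v, detour_detourSet]

theorem detour_comm_general (A : V → V → Prop) (v w : V) :
    detour (detour A v) w = detour (detour A w) v := by
  rw [detour_detour, detour_detour, Set.pair_comm]

end DetourSet

/-- Detour operations on a digraph commute: `(D↑v)↑w = (D↑w)↑v`. -/
theorem detour_comm {V : Type*} (A : V → V → Prop) (hA : Irreflexive A) (v w : V) :
    detour (detour A v) w = detour (detour A w) v :=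
  detour_comm_general A v w
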